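/- Let $1 < p < \infty$, $\mathcal{S}$ a sparse family of dyadic cubes contained in a cube $R$, and $w$ a weight with $\sigma = w^{1-p'}$. Then $\sum_{Q \in \mathcal{S}} (\fint_Q w)^{p'}\sigma(Q) \lesssim [w]_{(A_p)^{1/p}(A_\infty^{\exp})^{1/p'}}^{p'} \, w(R)$, where the implicit constant depends only on $p$ and dimension. -/

import Mathlib

open MeasureTheory Set
open scoped ENNReal

noncomputable section

/-- A (closed, axis-parallel, nondegenerate) cube in `ℝⁿ`. -/
def IsCube {n : ℕ} (Q : Set (Fin n → ℝ)) : Prop :=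
  ∃ (a : Fin n → ℝ) (l : ℝ), 0 < l ∧ Q = Set.Icc a (a + fun _ => l)

/-- The average `⨍_Q f` of `f` over `Q` (w.r.t. Lebesgue measure). -/
def avg {n : ℕ} (Q : Set (Fin n → ℝ)) (f : (Fin n → ℝ) → ℝ) : ℝ :=
  (volume Q).toReal⁻¹ * ∫ x in Q, f x

/-- The `A_p` quantity `A_p(w,Q) = (⨍_Q w) (⨍_Q w^{-1/(p-1)})^{p-1}`. -/
def ApQ {n : ℕ} (p : ℝ) (w : (Fin n → ℝ) → ℝ) (Q : Set (Fin n → ℝ)) : ℝ :=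
  avg Q w * (avg Q fun x => w x ^ (-(1 / (p - 1)))) ^ (p - 1)

/-- The exponential `A_∞` quantity `A_∞^exp(w,Q) = (⨍_Q w) exp(-⨍_Q log w)`. -/
def AexpQ {n : ℕ} (w : (Fin n → ℝ) → ℝ) (Q : Set (Fin n → ℝ)) : ℝ :=
  avg Q w * Real.exp (-(avg Q fun x => Real.log (w x)))

/-- A dyadic cube of generation `k` (half-open, side length `2^k`). -/
def IsDyadicCubeOf {n : ℕ} (k : ℤ) (Q : Set (Fin n → ℝ)) : Prop :=
  ∃ a : Fin n → ℝ, Q = Set.univ.pi fun i => Set.Ico (a i) (a i + (2 : ℝ) ^ k)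

/-- A dyadic grid: a collection of cubes of side lengths `2^k`, pairwise nested or
disjoint, partitioning `ℝⁿ` at each scale. -/
def IsDyadicGrid {n : ℕ} (𝒟 : Set (Set (Fin n → ℝ))) : Prop :=
  (∀ Q ∈ 𝒟, ∃ k : ℤ, IsDyadicCubeOf k Q) ∧
  (∀ Q ∈ 𝒟, ∀ P ∈ 𝒟, Q ⊆ P ∨ P ⊆ Q ∨ Disjoint Q P) ∧
  (∀ k : ℤ, ⋃₀ {Q | Q ∈ 𝒟 ∧ IsDyadicCubeOf k Q} = Set.univ ∧
    Set.PairwiseDisjoint {Q | Q ∈ 𝒟 ∧ IsDyadicCubeOf k Q} id)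

/-- The union of the strict subcubes of `Q` belonging to the family `𝒮`. -/
def strictUnion {n : ℕ} (𝒮 : Set (Set (Fin n → ℝ))) (Q : Set (Fin n → ℝ)) :
    Set (Fin n → ℝ) :=
  ⋃ Q' ∈ {Q' | Q' ∈ 𝒮 ∧ Q' ⊂ Q}, Q'

/-- The "major subset" `E_Q = Q \ ⋃ {Q' ∈ 𝒮 : Q' ⊊ Q}`. -/
def Eset {n : ℕ} (𝒮 : Set (Set (Fin n → ℝ))) (Q : Set (Fin n → ℝ)) :
    Set (Fin n → ℝ) :=
  Q \ strictUnion 𝒮 Q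

/-- A sparse family: for each `Q ∈ 𝒮`, `|⋃ {Q' ∈ 𝒮 : Q' ⊊ Q}| ≤ |Q|/2`. -/
def IsSparse {n : ℕ} (𝒮 : Set (Set (Fin n → ℝ))) : Prop :=
  ∀ Q ∈ 𝒮, volume (strictUnion 𝒮 Q) ≤ volume Q / 2

section CarlesonEmbedding

variable {X : Type*} [MeasurableSpace X] {μ : Measure X}

/-- Cauchy–Schwarz on a set of finite measure. -/
lemma sq_setIntegral_le {A : Set X} {g : X → ℝ} (hA : μ A ≠ ∞)
    (hg : IntegrableOn g A μ) (hg2 : IntegrableOn (fun x => g x ^ 2) A μ) :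
    (∫ x in A, g x ∂μ) ^ 2 ≤ μ.real A * ∫ x in A, g x ^ 2 ∂μ := by
  have : IsFiniteMeasure (μ.restrict A) := ⟨by simpa using hA.lt_top⟩
  set I := ∫ x in A, g x ∂μ with hI
  set J := ∫ x in A, g x ^ 2 ∂μ with hJ
  have key : ∀ c : ℝ, 0 ≤ J - 2 * c * I + c ^ 2 * μ.real A := by
    intro c
    have h : ∫ x in A, (g x - c) ^ 2 ∂μ = J - 2 * c * I + c ^ 2 * μ.real A := by
      have e : ∀ x, (g x - c) ^ 2 = g x ^ 2 - 2 * c * g x + c ^ 2 := fun x => by ring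
      simp_rw [e]
      have hi : Integrable (fun x => 2 * c * g x) (μ.restrict A) := hg.const_mul _
      rw [integral_add (f := fun x => g x ^ 2 - 2 * c * g x) (Integrable.sub hg2 hi)
        (integrable_const _),
        integral_sub hg2 hi,
        integral_const_mul, integral_const]
      simp [hI, hJ, mul_comm]
    rw [← h]
    exact integral_nonneg fun x => sq_nonneg _
  have h := discrim_le_zero (a := μ.real A) (b := -2 * I) (c := J)
    fun c => by nlinarith [key c]
  rw [discrim] at h
  nlinarith

lemma add_sq_div_add_le {a b c d : ℝ} (hc : 0 < c) (hd : 0 ≤ d) (h : d = 0 → b = 0) :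
    (a + b) ^ 2 / (c + d) ≤ a ^ 2 / c + b ^ 2 / d := by
  rcases hd.eq_or_lt with rfl | hd
  · simp [h rfl]
  · rw [div_add_div _ _ hc.ne' hd.ne', div_le_div_iff₀ (by positivity) (by positivity)]
    nlinarith [mul_nonneg (mul_pos hc hd).le (sq_nonneg (a * d - b * c)),
      sq_nonneg (a * d - b * c)]

/-- Bellman-function form of the Carleson embedding theorem for a finite laminar family. -/
lemma carleson_embedding_bellman {g : X → ℝ} (α : Set X → ℝ) (hα : ∀ Q, 0 ≤ α Q)
    (F : Finset (Set X)) :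
    ∀ A : Set X, MeasurableSet A → μ A ≠ ∞ → IntegrableOn g A μ →
      IntegrableOn (fun x => g x ^ 2) A μ →
      (∀ Q ∈ F, MeasurableSet Q ∧ 0 < μ Q ∧ Q ⊆ A) →
      (∀ Q ∈ F, ∀ P ∈ F, Q ⊆ P ∨ P ⊆ Q ∨ Disjoint Q P) →
      (∀ Q ∈ F, ∀ G ⊆ F, (∀ P ∈ G, P ⊆ Q) → ∑ P ∈ G, α P ≤ μ.real Q) →
      ∑ Q ∈ F, ((μ.real Q)⁻¹ * ∫ x in Q, g x ∂μ) ^ 2 * α Q ≤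
        4 * ∫ x in A, g x ^ 2 ∂μ -
          4 * ((∫ x in A, g x ∂μ) ^ 2 / (μ.real A + ∑ Q ∈ F, α Q)) := by
  classical
  induction F using Finset.strongInduction with
  | H F ih =>
  intro A hA hAfin hg hg2 hF hlam hpack
  rcases F.eq_empty_or_nonempty with rfl | hne
  · have hCS := sq_setIntegral_le hAfin hg hg2
    have hJ : 0 ≤ ∫ x in A, g x ^ 2 ∂μ := integral_nonneg fun x => sq_nonneg _
    have := div_le_of_le_mul₀ measureReal_nonneg hJ (hCS.trans_eq (mul_comm _ _))
    simp only [Finset.sum_empty, add_zero]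
    linarith
  obtain ⟨Q, hQF, hQmax⟩ := F.exists_maximal hne
  obtain ⟨hQm, hQpos, hQA⟩ := hF Q hQF
  have hQfin : μ Q ≠ ∞ := measure_ne_top_of_subset hQA hAfin
  set F₁ := F.filter (· ⊂ Q) with hF₁
  set F₂ := F.filter (Disjoint Q) with hF₂
  have hF₁F : F₁ ⊆ F := Finset.filter_subset _ _
  have hF₂F : F₂ ⊆ F := Finset.filter_subset _ _
  have hQ₁ : Q ∉ F₁ := by simp [hF₁]
  have hQne : Q.Nonempty := nonempty_of_measure_ne_zero hQpos.ne'
  have hQ₂ : Q ∉ F₂ := by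
    simp [hF₂, hQne.ne_empty]
  have hdisj : Disjoint (insert Q F₁) F₂ := by
    rw [Finset.disjoint_left]
    intro P hP hP2
    rcases Finset.mem_insert.1 hP with rfl | hP
    · exact hQ₂ hP2
    · have h1 : P ⊂ Q := (Finset.mem_filter.1 hP).2
      have h2 : Disjoint Q P := (Finset.mem_filter.1 hP2).2
      have hPe : P = ∅ := disjoint_self.1 (h2.mono_left h1.subset)
      have := (hF P (hF₁F hP)).2.1
      simp [hPe] at this
  have hsplit : F = insert Q F₁ ∪ F₂ := by
    ext P
    simp only [hF₁, hF₂, Finset.mem_union, Finset.mem_insert, Finset.mem_filter]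
    constructor
    · intro hP
      rcases hlam Q hQF P hP with h | h | h
      · exact Or.inl (Or.inl ((hQmax hP h).antisymm h))
      · rcases h.eq_or_ssubset with h | h
        · exact Or.inl (Or.inl h)
        · exact Or.inl (Or.inr ⟨hP, h⟩)
      · exact Or.inr ⟨hP, h⟩
    · rintro ((rfl | h) | h)
      exacts [hQF, h.1, h.1]
  have ih₁ := ih F₁ (hF₁F.ssubset_of_mem_notMem hQF hQ₁) Q hQm hQfin (hg.mono_set hQA)
    (hg2.mono_set hQA)
    (fun P hP => ⟨(hF P (hF₁F hP)).1, (hF P (hF₁F hP)).2.1, (Finset.mem_filter.1 hP).2.subset⟩)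
    (fun P hP P' hP' => hlam P (hF₁F hP) P' (hF₁F hP'))
    (fun P hP G hG => hpack P (hF₁F hP) G (hG.trans hF₁F))
  have ih₂ := ih F₂ (hF₂F.ssubset_of_mem_notMem hQF hQ₂) (A \ Q) (hA.diff hQm)
    (measure_ne_top_of_subset sdiff_subset hAfin) (hg.mono_set sdiff_subset)
    (hg2.mono_set sdiff_subset)
    (fun P hP => ⟨(hF P (hF₂F hP)).1, (hF P (hF₂F hP)).2.1,
      subset_sdiff.2 ⟨(hF P (hF₂F hP)).2.2, (Finset.mem_filter.1 hP).2.symm⟩⟩)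
    (fun P hP P' hP' => hlam P (hF₂F hP) P' (hF₂F hP'))
    (fun P hP G hG => hpack P (hF₂F hP) G (hG.trans hF₂F))
  have hpQ := hpack Q hQF (insert Q F₁) (Finset.insert_subset hQF hF₁F) (by
    intro P hP
    rcases Finset.mem_insert.1 hP with rfl | hP
    · exact Subset.rfl
    · exact (Finset.mem_filter.1 hP).2.subset)
  rw [Finset.sum_insert hQ₁] at hpQ
  have e2 : ∫ x in A, g x ^ 2 ∂μ = ∫ x in Q, g x ^ 2 ∂μ + ∫ x in A \ Q, g x ^ 2 ∂μ := by
    rw [add_comm, ← setIntegral_union disjoint_sdiff_left hQm (hg2.mono_set sdiff_subset)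
      (hg2.mono_set hQA), sdiff_union_of_subset hQA]
  have e1 : ∫ x in A, g x ∂μ = ∫ x in Q, g x ∂μ + ∫ x in A \ Q, g x ∂μ := by
    rw [add_comm, ← setIntegral_union disjoint_sdiff_left hQm (hg.mono_set sdiff_subset)
      (hg.mono_set hQA), sdiff_union_of_subset hQA]
  have e0 : μ.real A = μ.real Q + μ.real (A \ Q) := by
    rw [measureReal_sdiff hQA hQm hAfin]; ring
  have hs₁ : 0 ≤ ∑ P ∈ F₁, α P := Finset.sum_nonneg fun P _ => hα P
  have hs₂ : 0 ≤ ∑ P ∈ F₂, α P := Finset.sum_nonneg fun P _ => hα P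
  have hq : 0 < μ.real Q := ENNReal.toReal_pos hQpos.ne' hQfin
  have hd : 0 ≤ μ.real (A \ Q) := measureReal_nonneg
  have hαQ := hα Q
  have hnull : μ.real (A \ Q) + ∑ P ∈ F₂, α P = 0 → ∫ x in A \ Q, g x ∂μ = 0 := by
    intro h
    have h0 : μ.real (A \ Q) = 0 := by linarith
    exact setIntegral_measure_zero _
      ((measureReal_eq_zero_iff (measure_ne_top_of_subset sdiff_subset hAfin)).1 h0)
  have hcs := add_sq_div_add_le (a := ∫ x in Q, g x ∂μ)
    (c := μ.real Q + (α Q + ∑ P ∈ F₁, α P)) (by positivity) (add_nonneg hd hs₂) hnull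
  have hstep : ((μ.real Q)⁻¹ * ∫ x in Q, g x ∂μ) ^ 2 * α Q +
      4 * ((∫ x in Q, g x ∂μ) ^ 2 / (μ.real Q + (α Q + ∑ P ∈ F₁, α P))) ≤
      4 * ((∫ x in Q, g x ∂μ) ^ 2 / (μ.real Q + ∑ P ∈ F₁, α P)) := by
    generalize (∫ x in Q, g x ∂μ) = I
    generalize (∑ P ∈ F₁, α P) = s at *
    generalize α Q = t at *
    generalize μ.real Q = q at *
    have hA1 : 0 < q + s := by linarith
    have hB1 : 0 < q + (t + s) := by linarith
    have hle : (q + s) * (q + (t + s)) ≤ 4 * q ^ 2 := by nlinarith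
    have hmain : 4 * (I ^ 2 / (q + s)) - 4 * (I ^ 2 / (q + (t + s))) - (q⁻¹ * I) ^ 2 * t =
        I ^ 2 * t * (4 * q ^ 2 - (q + s) * (q + (t + s))) /
          (q ^ 2 * ((q + s) * (q + (t + s)))) := by
      field_simp
      ring
    have : 0 ≤ I ^ 2 * t * (4 * q ^ 2 - (q + s) * (q + (t + s))) /
          (q ^ 2 * ((q + s) * (q + (t + s)))) :=
      div_nonneg (mul_nonneg (by positivity) (by linarith)) (by positivity)
    linarith
  rw [hsplit, Finset.sum_union hdisj, Finset.sum_union hdisj, Finset.sum_insert hQ₁,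
    Finset.sum_insert hQ₁, e0, e1, e2]
  have earr : μ.real Q + μ.real (A \ Q) + (α Q + ∑ P ∈ F₁, α P + ∑ P ∈ F₂, α P) =
      μ.real Q + (α Q + ∑ P ∈ F₁, α P) + (μ.real (A \ Q) + ∑ P ∈ F₂, α P) := by ring
  rw [earr]
  linarith

/-- A finite laminar family, each of whose members is at most half covered by its strict
submembers, satisfies the Carleson packing condition. -/
lemma sum_half_measureReal_le_of_laminar {F G : Finset (Set X)} {Q : Set X}
    (hmeas : ∀ P ∈ F, MeasurableSet P) (hfin : ∀ P ∈ F, μ P ≠ ∞)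
    (hlam : ∀ P ∈ F, ∀ P' ∈ F, P ⊆ P' ∨ P' ⊆ P ∨ Disjoint P P')
    (hsparse : ∀ P ∈ F, μ (⋃ P' ∈ {P' | P' ∈ F ∧ P' ⊂ P}, P') ≤ μ P / 2)
    (hQ : Q ∈ F) (hG : G ⊆ F) (hGQ : ∀ P ∈ G, P ⊆ Q) :
    ∑ P ∈ G, μ.real P / 2 ≤ μ.real Q := by
  set U : Set X → Set X := fun P => ⋃ P' ∈ {P' | P' ∈ F ∧ P' ⊂ P}, P' with hU
  have hUm : ∀ P, MeasurableSet (U P) := fun P =>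
    Set.Finite.measurableSet_biUnion (F.finite_toSet.subset fun P' h => h.1)
      fun P' h => hmeas P' h.1
  have hE : ∀ P ∈ G, μ.real P / 2 ≤ μ.real (P \ U P) := by
    intro P hP
    have hPfin := hfin P (hG hP)
    have hs : μ.real (U P) ≤ μ.real P / 2 := by
      have := ENNReal.toReal_mono (ENNReal.div_ne_top hPfin two_ne_zero) (hsparse P (hG hP))
      rwa [ENNReal.toReal_div] at this
    have hsub : U P ⊆ P := iUnion₂_subset fun P' h => h.2.subset
    rw [measureReal_sdiff hsub (hUm P) hPfin]
    linarith
  have hdisj : (G : Set (Set X)).PairwiseDisjoint fun P => P \ U P := by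
    have aux : ∀ P ∈ G, ∀ P' ∈ G, P ≠ P' → P ⊆ P' → Disjoint (P \ U P) (P' \ U P') := by
      intro P hP P' hP' hne hsub
      refine disjoint_left.2 fun x hx hx' => hx'.2 ?_
      exact mem_iUnion₂.2 ⟨P, ⟨hG hP, hsub.ssubset_of_ne hne⟩, hx.1⟩
    intro P hP P' hP' hne
    rcases hlam P (hG hP) P' (hG hP') with h | h | h
    · exact aux P hP P' hP' hne h
    · exact (aux P' hP' P hP hne.symm h).symm
    · exact h.mono sdiff_subset sdiff_subset
  calc ∑ P ∈ G, μ.real P / 2 ≤ ∑ P ∈ G, μ.real (P \ U P) := Finset.sum_le_sum hE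
    _ = μ.real (⋃ P ∈ G, P \ U P) :=
      (measureReal_biUnion_finset hdisj (fun P hP => (hmeas P (hG hP)).diff (hUm P))
        fun P hP => measure_ne_top_of_subset sdiff_subset (hfin P (hG hP))).symm
    _ ≤ μ.real Q := measureReal_mono
      (iUnion₂_subset fun P hP => sdiff_subset.trans (hGQ P hP)) (hfin Q hQ)

end CarlesonEmbedding

section Weights

variable {n : ℕ}

lemma avg_eq_setAverage (Q : Set (Fin n → ℝ)) (f : (Fin n → ℝ) → ℝ) :
    avg Q f = ⨍ x in Q, f x := by
  rw [setAverage_eq, avg, smul_eq_mul, Measure.real]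

lemma avg_congr_set {Q Q' : Set (Fin n → ℝ)} (h : Q =ᵐ[volume] Q')
    (f : (Fin n → ℝ) → ℝ) : avg Q f = avg Q' f := by
  rw [avg, avg, measure_congr h, setIntegral_congr_set h]

lemma integrableOn_sqrt {Q : Set (Fin n → ℝ)} {w : (Fin n → ℝ) → ℝ} (hQ : volume Q ≠ ∞)
    (hw0 : ∀ x, 0 < w x) (hw : IntegrableOn w Q) :
    IntegrableOn (fun x => √(w x)) Q := by
  have : IsFiniteMeasure (volume.restrict Q) := ⟨by simpa using hQ.lt_top⟩
  refine Integrable.mono' ((integrable_const (1 : ℝ)).add hw)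
    (Real.continuous_sqrt.comp_aestronglyMeasurable hw.1) (Filter.Eventually.of_forall fun x => ?_)
  rw [Real.norm_of_nonneg (Real.sqrt_nonneg _)]
  simp only [Pi.add_apply]
  nlinarith [Real.sq_sqrt (hw0 x).le, sq_nonneg (√(w x) - 1)]

/-- Jensen's inequality: the geometric mean is at most the `L^{1/2}` mean. -/
lemma exp_avg_log_le {Q : Set (Fin n → ℝ)} {w : (Fin n → ℝ) → ℝ} (hQ : volume Q ≠ ∞)
    (hQ0 : volume Q ≠ 0) (hw0 : ∀ x, 0 < w x) (hw : IntegrableOn w Q)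
    (hlog : IntegrableOn (fun x => Real.log (w x)) Q) :
    Real.exp (avg Q fun x => Real.log (w x)) ≤ (avg Q fun x => √(w x)) ^ 2 := by
  have hexp : ∀ x, Real.exp (Real.log (w x) / 2) = √(w x) := fun x => by
    rw [← Real.log_sqrt (hw0 x).le, Real.exp_log (Real.sqrt_pos.2 (hw0 x))]
  have hJ := convexOn_exp.map_set_average_le (μ := volume) (t := Q)
    (f := fun x => Real.log (w x) / 2) Real.continuous_exp.continuousOn isClosed_univ hQ0 hQ
    (Filter.Eventually.of_forall fun _ => mem_univ _) (hlog.div_const 2)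
    (by simpa only [Function.comp_def, hexp] using integrableOn_sqrt hQ hw0 hw)
  simp only [hexp, ← avg_eq_setAverage] at hJ
  have hhalf : avg Q (fun x => Real.log (w x) / 2) = avg Q (fun x => Real.log (w x)) / 2 := by
    rw [avg, avg, integral_div, mul_div_assoc]
  rw [hhalf] at hJ
  calc Real.exp (avg Q fun x => Real.log (w x))
      = Real.exp ((avg Q fun x => Real.log (w x)) / 2) ^ 2 := by
        rw [← Real.exp_nat_mul]; congr 1; push_cast; ring
    _ ≤ _ := pow_le_pow_left₀ (Real.exp_pos _).le hJ 2

lemma avg_nonneg {Q : Set (Fin n → ℝ)} {f : (Fin n → ℝ) → ℝ} (hf : ∀ x, 0 ≤ f x) :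
    0 ≤ avg Q f :=
  mul_nonneg (inv_nonneg.2 ENNReal.toReal_nonneg) (integral_nonneg hf)

lemma ApQ_nonneg {p : ℝ} {w : (Fin n → ℝ) → ℝ} (hw : ∀ x, 0 < w x) (Q : Set (Fin n → ℝ)) :
    0 ≤ ApQ p w Q :=
  mul_nonneg (avg_nonneg fun x => (hw x).le)
    (Real.rpow_nonneg (avg_nonneg fun x => Real.rpow_nonneg (hw x).le _) _)

lemma AexpQ_nonneg {w : (Fin n → ℝ) → ℝ} (hw : ∀ x, 0 < w x) (Q : Set (Fin n → ℝ)) :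
    0 ≤ AexpQ w Q :=
  mul_nonneg (avg_nonneg fun x => (hw x).le) (Real.exp_pos _).le

lemma avg_rpow_mul_integral_eq {p : ℝ} (hp : 1 < p) {w : (Fin n → ℝ) → ℝ}
    (hw : ∀ x, 0 < w x) {Q : Set (Fin n → ℝ)} (hQ : 0 < volume.real Q) :
    avg Q w ^ (p / (p - 1)) * ∫ x in Q, w x ^ (-(1 / (p - 1))) =
      (ApQ p w Q ^ (1 / p) * AexpQ w Q ^ ((p - 1) / p)) ^ (p / (p - 1)) *
        (Real.exp (avg Q fun x => Real.log (w x)) * volume.real Q) := by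
  have hp0 : 0 < p := by linarith
  have hp1 : 0 < p - 1 := by linarith
  have hW : 0 ≤ avg Q w := avg_nonneg fun x => (hw x).le
  have hS : 0 ≤ avg Q fun x => w x ^ (-(1 / (p - 1))) :=
    avg_nonneg fun x => Real.rpow_nonneg (hw x).le _
  have hA := ApQ_nonneg (p := p) hw Q
  have hB := AexpQ_nonneg hw Q
  have hint : ∫ x in Q, w x ^ (-(1 / (p - 1))) =
      (avg Q fun x => w x ^ (-(1 / (p - 1)))) * volume.real Q := by
    rw [avg, ← Measure.real]
    field_simp
  rw [Real.mul_rpow (Real.rpow_nonneg hA _) (Real.rpow_nonneg hB _), ← Real.rpow_mul hA,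
    ← Real.rpow_mul hB]
  have x1 : 1 / p * (p / (p - 1)) = 1 / (p - 1) := by field_simp
  have x2 : (p - 1) / p * (p / (p - 1)) = 1 := by field_simp
  have x3 : p / (p - 1) = 1 / (p - 1) + 1 := by field_simp; ring
  rw [x1, x2, Real.rpow_one, hint, x3,
    Real.rpow_add_of_nonneg hW (by positivity) zero_le_one, Real.rpow_one, ApQ, AexpQ,
    Real.mul_rpow hW (Real.rpow_nonneg hS _), ← Real.rpow_mul hS,
    mul_one_div_cancel hp1.ne', Real.rpow_one, Real.exp_neg]
  have := Real.exp_pos (avg Q fun x => Real.log (w x))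
  field_simp

lemma IsDyadicCubeOf.exists_isCube_ae_eq {k : ℤ} {Q : Set (Fin n → ℝ)}
    (h : IsDyadicCubeOf k Q) : ∃ Q', IsCube Q' ∧ Q =ᵐ[volume] Q' := by
  obtain ⟨a, rfl⟩ := h
  exact ⟨_, ⟨a, (2 : ℝ) ^ k, by positivity, rfl⟩, Measure.univ_pi_Ico_ae_eq_Icc⟩

lemma IsDyadicCubeOf.measurableSet {k : ℤ} {Q : Set (Fin n → ℝ)}
    (h : IsDyadicCubeOf k Q) : MeasurableSet Q := by
  obtain ⟨a, rfl⟩ := h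
  exact MeasurableSet.univ_pi fun i => measurableSet_Ico

lemma IsDyadicCubeOf.volume_pos {k : ℤ} {Q : Set (Fin n → ℝ)}
    (h : IsDyadicCubeOf k Q) : 0 < volume Q := by
  obtain ⟨a, rfl⟩ := h
  rw [Real.volume_pi_Ico]
  refine pos_iff_ne_zero.2 (Finset.prod_ne_zero_iff.2 fun i _ => ?_)
  simp only [add_sub_cancel_left, ne_eq, ENNReal.ofReal_eq_zero, not_le]
  positivity

/-- The bound for one cube of the sum by the two-weight characteristic. -/
lemma IsDyadicCubeOf.ofReal_avg_rpow_mul_le {p : ℝ} (hp : 1 < p) {w : (Fin n → ℝ) → ℝ}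
    (hw : ∀ x, 0 < w x) {k : ℤ} {Q : Set (Fin n → ℝ)} (h : IsDyadicCubeOf k Q)
    (hfin : volume Q ≠ ∞) :
    ENNReal.ofReal (avg Q w ^ (p / (p - 1)) * ∫ x in Q, w x ^ (-(1 / (p - 1)))) ≤
      (⨆ Q : {Q : Set (Fin n → ℝ) // IsCube Q},
        ENNReal.ofReal (ApQ p w Q.1 ^ (1 / p) * AexpQ w Q.1 ^ ((p - 1) / p))) ^ (p / (p - 1)) *
      ENNReal.ofReal (Real.exp (avg Q fun x => Real.log (w x)) * volume.real Q) := by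
  obtain ⟨Q', hQ', hae⟩ := h.exists_isCube_ae_eq
  have hp1 : 0 < p - 1 := by linarith
  have hexp : 0 ≤ p / (p - 1) := div_nonneg (by linarith) hp1.le
  have hnn : 0 ≤ ApQ p w Q ^ (1 / p) * AexpQ w Q ^ ((p - 1) / p) :=
    mul_nonneg (Real.rpow_nonneg (ApQ_nonneg hw Q) _) (Real.rpow_nonneg (AexpQ_nonneg hw Q) _)
  rw [avg_rpow_mul_integral_eq hp hw (ENNReal.toReal_pos h.volume_pos.ne' hfin),
    ENNReal.ofReal_mul (Real.rpow_nonneg hnn _), ← ENNReal.ofReal_rpow_of_nonneg hnn hexp]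
  have hA : ApQ p w Q = ApQ p w Q' := by simp only [ApQ, avg_congr_set hae]
  have hB : AexpQ w Q = AexpQ w Q' := by simp only [AexpQ, avg_congr_set hae]
  rw [hA, hB]
  gcongr
  exact le_iSup (fun Q : {Q : Set (Fin n → ℝ) // IsCube Q} =>
    ENNReal.ofReal (ApQ p w Q.1 ^ (1 / p) * AexpQ w Q.1 ^ ((p - 1) / p))) ⟨Q', hQ'⟩

/-- The `L¹` bound for the geometric maximal operator, over a finite sparse family. -/
lemma sum_exp_avg_log_mul_volume_le {𝒟 𝒮 : Set (Set (Fin n → ℝ))} (h𝒟 : IsDyadicGrid 𝒟)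
    (h𝒮𝒟 : 𝒮 ⊆ 𝒟) (h𝒮 : IsSparse 𝒮) {w : (Fin n → ℝ) → ℝ} (hw0 : ∀ x, 0 < w x)
    {R : Set (Fin n → ℝ)} (hRm : MeasurableSet R) (hR : volume R ≠ ∞) (hw : IntegrableOn w R)
    (hlog : IntegrableOn (fun x => Real.log (w x)) R) (hsub : ∀ Q ∈ 𝒮, Q ⊆ R)
    {F : Finset (Set (Fin n → ℝ))} (hF : ∀ Q ∈ F, Q ∈ 𝒮) :
    ∑ Q ∈ F, Real.exp (avg Q fun x => Real.log (w x)) * volume.real Q ≤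
      8 * ∫ x in R, w x := by
  have hfin : ∀ Q ∈ F, volume Q ≠ ∞ := fun Q hQ =>
    measure_ne_top_of_subset (hsub Q (hF Q hQ)) hR
  have hcube : ∀ Q ∈ F, MeasurableSet Q ∧ 0 < volume Q ∧ Q ⊆ R := by
    intro Q hQ
    obtain ⟨k, hk⟩ := h𝒟.1 Q (h𝒮𝒟 (hF Q hQ))
    exact ⟨hk.measurableSet, hk.volume_pos, hsub Q (hF Q hQ)⟩
  have hlam : ∀ Q ∈ F, ∀ P ∈ F, Q ⊆ P ∨ P ⊆ Q ∨ Disjoint Q P := fun Q hQ P hP =>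
    h𝒟.2.1 Q (h𝒮𝒟 (hF Q hQ)) P (h𝒮𝒟 (hF P hP))
  have hsq : ∀ x, √(w x) ^ 2 = w x := fun x => Real.sq_sqrt (hw0 x).le
  have hmain := carleson_embedding_bellman (μ := volume) (g := fun x => √(w x))
    (fun Q => volume.real Q / 2) (fun Q => by positivity) F R hRm hR
    (integrableOn_sqrt hR hw0 hw) (by simpa only [hsq] using hw) hcube hlam
    (fun Q hQ G hG hGQ => sum_half_measureReal_le_of_laminar (fun P hP => (hcube P hP).1) hfin
      hlam (fun P hP => le_trans (measure_mono (biUnion_subset_biUnion_left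
        fun P' (h : P' ∈ F ∧ P' ⊂ P) => show P' ∈ 𝒮 ∧ P' ⊂ P from ⟨hF P' h.1, h.2⟩))
        (h𝒮 P (hF P hP))) hQ hG hGQ)
  simp only [hsq] at hmain
  have hpos : 0 ≤ (∫ x in R, √(w x)) ^ 2 / (volume.real R + ∑ Q ∈ F, volume.real Q / 2) := by
    positivity
  calc ∑ Q ∈ F, Real.exp (avg Q fun x => Real.log (w x)) * volume.real Q
      ≤ ∑ Q ∈ F, 2 * (((volume.real Q)⁻¹ * ∫ x in Q, √(w x)) ^ 2 * (volume.real Q / 2)) := by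
        refine Finset.sum_le_sum fun Q hQ => ?_
        have h := exp_avg_log_le (hfin Q hQ) (hcube Q hQ).2.1.ne' hw0
          (hw.mono_set (hcube Q hQ).2.2) (hlog.mono_set (hcube Q hQ).2.2)
        have := mul_le_mul_of_nonneg_right h (measureReal_nonneg (μ := volume) (s := Q))
        simp only [avg, ← measureReal_def] at this ⊢
        linarith
    _ ≤ 8 * ∫ x in R, w x := by
        rw [← Finset.mul_sum]
        linarith

end Weights

/-- For a sparse family `𝒮` of dyadic cubes contained in a cube `R` and
`σ = w^{1-p'}`:
`∑_{Q ∈ 𝒮} (⨍_Q w)^{p'} σ(Q) ≲ [w]_{(A_p)^{1/p}(A_∞^exp)^{1/p'}}^{p'} w(R)`,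
with implicit constant depending only on `p` and the dimension. -/
theorem stmt13 (p : ℝ) (hp : 1 < p) (n : ℕ) :
    ∃ C > (0 : ℝ), ∀ (𝒟 𝒮 : Set (Set (Fin n → ℝ))),
      IsDyadicGrid 𝒟 → 𝒮 ⊆ 𝒟 → IsSparse 𝒮 →
      ∀ (w σ : (Fin n → ℝ) → ℝ), (∀ x, 0 < w x) →
      σ = (fun x => w x ^ (-(1 / (p - 1)))) →
      LocallyIntegrable w volume → LocallyIntegrable σ volume →
      LocallyIntegrable (fun x => Real.log (w x)) volume →
      ∀ R : Set (Fin n → ℝ), IsCube R → (∀ Q ∈ 𝒮, Q ⊆ R) →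
      ∑' Q : 𝒮, ENNReal.ofReal (avg Q.1 w ^ (p / (p - 1)) * ∫ x in Q.1, σ x) ≤
        ENNReal.ofReal C *
          (⨆ Q : {Q : Set (Fin n → ℝ) // IsCube Q},
            ENNReal.ofReal (ApQ p w Q.1 ^ (1 / p) * AexpQ w Q.1 ^ ((p - 1) / p)))
            ^ (p / (p - 1)) *
          ENNReal.ofReal (∫ x in R, w x) := by
  refine ⟨8, by norm_num, ?_⟩
  intro 𝒟 𝒮 h𝒟 h𝒮𝒟 h𝒮 w σ hw0 hσ hw _ hlog R hR hsub
  subst hσ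
  obtain ⟨a, l, hl, rfl⟩ := hR
  have hw' := hw.integrableOn_isCompact (isCompact_Icc (a := a) (b := a + fun _ => l))
  have hlog' := hlog.integrableOn_isCompact (isCompact_Icc (a := a) (b := a + fun _ => l))
  have hRfin : volume (Icc a (a + fun _ => l)) ≠ ∞ := isCompact_Icc.measure_lt_top.ne
  rw [ENNReal.tsum_eq_iSup_sum]
  refine iSup_le fun F => ?_
  have hbound := sum_exp_avg_log_mul_volume_le h𝒟 h𝒮𝒟 h𝒮 hw0 measurableSet_Icc hRfin hw' hlog'
    hsub (F := F.map (Function.Embedding.subtype _)) (by simp +contextual)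
  rw [Finset.sum_map] at hbound
  calc _ ≤ ∑ Q ∈ F, (⨆ Q : {Q : Set (Fin n → ℝ) // IsCube Q},
          ENNReal.ofReal (ApQ p w Q.1 ^ (1 / p) * AexpQ w Q.1 ^ ((p - 1) / p))) ^ (p / (p - 1)) *
        ENNReal.ofReal (Real.exp (avg Q.1 fun x => Real.log (w x)) * volume.real Q.1) := by
        refine Finset.sum_le_sum fun Q _ => ?_
        obtain ⟨k, hk⟩ := h𝒟.1 Q.1 (h𝒮𝒟 Q.2)
        exact hk.ofReal_avg_rpow_mul_le hp hw0
          (measure_ne_top_of_subset (hsub Q.1 Q.2) hRfin)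
    _ ≤ _ := by
        rw [← Finset.mul_sum, ← ENNReal.ofReal_sum_of_nonneg fun Q _ => by positivity,
          mul_comm (ENNReal.ofReal 8), mul_assoc, ← ENNReal.ofReal_mul (by norm_num)]
        gcongr
        exact hbound
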